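/- Fix an integer n ≥ 2, a probability space (Ω, 𝔽, ℙ), and τ ≥ 0. Let B : Ω → Matrix (Fin n) (Fin n) ℝ be a random matrix whose law is a centered Gaussian measure on the space of n×n real matrices and such that: (B0) tr B = 0 almost surely; (B1) for every orthogonal matrix O the matrix O B Oᵀ has the same law as B; (B2) E[B·B] = 0 entrywise; (B3) E[Bᵀ·B] = τ·Id entrywise. Write B_sym = (B + Bᵀ)/2 and B_skew = (B − Bᵀ)/2. Then B_sym and B_skew are independent random matrices, and E[B_sym·B_sym] = (τ/2)·Id while E[B_skew·B_skew] = −(τ/2)·Id. -/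

import Mathlib

open MeasureTheory ProbabilityTheory Matrix

instance matrixMeasurableSpace (m k : Type*) :
    MeasurableSpace (Matrix m k ℝ) :=
  inferInstanceAs (MeasurableSpace (m → k → ℝ))

theorem sym_skew_independent_and_moments
    (n : ℕ) (hn : 2 ≤ n)
    (Ω : Type*) [MeasureSpace Ω] [IsProbabilityMeasure (ℙ : Measure Ω)]
    (τ : ℝ) (hτ : 0 ≤ τ)
    (B : Ω → Matrix (Fin n) (Fin n) ℝ)
    (hmeas : Measurable B)
    -- the law of `B` is a centered Gaussian measure: every one-dimensional linear
    -- projection of it is a centered Gaussian distribution on `ℝ`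
    (hGauss : ∀ ℓ : Matrix (Fin n) (Fin n) ℝ →ₗ[ℝ] ℝ, ∃ v : NNReal,
      Measure.map (fun ω => ℓ (B ω)) ℙ = gaussianReal 0 v)
    (hB0 : ∀ᵐ ω ∂ℙ, (B ω).trace = 0)
    (hB1 : ∀ O : Matrix (Fin n) (Fin n) ℝ, Oᵀ * O = 1 →
      Measure.map (fun ω => O * B ω * Oᵀ) ℙ = Measure.map B ℙ)
    (hB2 : ∀ i j : Fin n, ∫ ω, (B ω * B ω) i j ∂ℙ = 0)
    (hB3 : ∀ i j : Fin n, ∫ ω, ((B ω)ᵀ * B ω) i j ∂ℙ = τ * (1 : Matrix (Fin n) (Fin n) ℝ) i j) :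
    IndepFun (fun ω => (B ω + (B ω)ᵀ) / 2) (fun ω => (B ω - (B ω)ᵀ) / 2) ℙ
    ∧ (∀ i j : Fin n, ∫ ω, (((B ω + (B ω)ᵀ) / 2) * ((B ω + (B ω)ᵀ) / 2)) i j ∂ℙ
        = (τ / 2) * (1 : Matrix (Fin n) (Fin n) ℝ) i j)
    ∧ (∀ i j : Fin n, ∫ ω, (((B ω - (B ω)ᵀ) / 2) * ((B ω - (B ω)ᵀ) / 2)) i j ∂ℙ
        = -(τ / 2) * (1 : Matrix (Fin n) (Fin n) ℝ) i j) := by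
  have hent : ∀ i j, Measurable fun ω => B ω i j := fun i j =>
    (measurable_pi_apply j).comp ((measurable_pi_apply i).comp hmeas)
  have hlin : ∀ ℓ : Matrix (Fin n) (Fin n) ℝ →ₗ[ℝ] ℝ, (Measurable fun ω => ℓ (B ω)) →
      MemLp (fun ω => ℓ (B ω)) 2 ℙ ∧ ∫ ω, ℓ (B ω) ∂ℙ = 0 := by
    intro ℓ hm
    obtain ⟨v, hv⟩ := hGauss ℓ
    constructor
    · have h := memLp_id_gaussianReal' (μ := 0) (v := v) 2 (by simp)
      rw [← hv, memLp_map_measure_iff (by fun_prop) hm.aemeasurable] at h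
      exact h
    · have h := integral_map (μ := (ℙ : Measure Ω)) hm.aemeasurable
        (f := fun x : ℝ => x) (by fun_prop)
      rw [hv, integral_id_gaussianReal] at h
      exact h.symm
  have hE : ∀ i j, MemLp (fun ω => B ω i j) 2 ℙ ∧ ∫ ω, B ω i j ∂ℙ = 0 := by
    intro i j
    exact hlin (Matrix.entryLinearMap ℝ ℝ i j) (hent i j)
  have hint : ∀ i j k l, Integrable (fun ω => B ω i j * B ω k l) ℙ := fun i j k l =>
    (hE i j).1.integrable_mul (hE k l).1
  have hinv : ∀ O : Matrix (Fin n) (Fin n) ℝ, Oᵀ * O = 1 → ∀ i j k l,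
      ∫ ω, (O * B ω * Oᵀ) i j * (O * B ω * Oᵀ) k l ∂ℙ = ∫ ω, B ω i j * B ω k l ∂ℙ := by
    intro O hO i j k l
    have hmO : Measurable fun ω => O * B ω * Oᵀ := by
      refine measurable_pi_lambda _ fun a => measurable_pi_lambda _ fun b => ?_
      simp only [Matrix.mul_apply]
      fun_prop
    have hev : ∀ i j, Measurable fun M : Matrix (Fin n) (Fin n) ℝ => M i j := fun i j =>
      (measurable_pi_apply j).comp (measurable_pi_apply i)
    have hf : Measurable fun M : Matrix (Fin n) (Fin n) ℝ => M i j * M k l :=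
      (hev i j).mul (hev k l)
    have h1 := integral_map (μ := (ℙ : Measure Ω)) hmO.aemeasurable hf.aestronglyMeasurable
    have h2 := integral_map (μ := (ℙ : Measure Ω)) hmeas.aemeasurable hf.aestronglyMeasurable
    rw [← h1, hB1 O hO, h2]
  have hflip : ∀ m i j k l, ∫ ω, B ω i j * B ω k l ∂ℙ =
      (if i = m then -1 else 1) * (if j = m then -1 else 1) * (if k = m then -1 else 1) *
      (if l = m then -1 else 1) * ∫ ω, B ω i j * B ω k l ∂ℙ := by
    intro m i j k l
    conv_lhs => rw [← hinv (Matrix.diagonal fun a => if a = m then -1 else 1) (by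
      rw [Matrix.diagonal_transpose, Matrix.diagonal_mul_diagonal, ← Matrix.diagonal_one]
      congr 1; ext a; split_ifs <;> norm_num) i j k l]
    simp only [Matrix.diagonal_transpose, Matrix.diagonal_mul, Matrix.mul_diagonal]
    rw [← integral_const_mul]
    congr 1; ext ω; ring
  have hswap : ∀ a b, ∫ ω, B ω a b * B ω a b ∂ℙ = ∫ ω, B ω b a * B ω b a ∂ℙ := by
    intro a b
    rw [← hinv (Matrix.swap ℝ a b) (by rw [Matrix.transpose_swap, Matrix.swap_mul_self]) a b a b]
    simp [Matrix.transpose_swap]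
  have hdiv : ∀ M : Matrix (Fin n) (Fin n) ℝ, M / 2 = (2⁻¹ : ℝ) • M := by
    intro M
    have h2 : (2 : Matrix (Fin n) (Fin n) ℝ)⁻¹ = (2⁻¹ : ℝ) • 1 := by
      apply Matrix.inv_eq_right_inv
      ext i j
      have : (2 : Matrix (Fin n) (Fin n) ℝ) = (2 : ℝ) • 1 := by
        rw [two_smul]; norm_num
      rw [this]; simp
    rw [div_eq_mul_inv, h2]; simp
  have hS : ∀ ω i j, ((B ω + (B ω)ᵀ) / 2) i j = 2⁻¹ * (B ω i j + B ω j i) := by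
    intro ω i j; rw [hdiv]; simp
  have hA : ∀ ω i j, ((B ω - (B ω)ᵀ) / 2) i j = 2⁻¹ * (B ω i j - B ω j i) := by
    intro ω i j; rw [hdiv]; simp
  have hadd : ∀ f g h k : Ω → ℝ, Integrable f ℙ → Integrable g ℙ → Integrable h ℙ →
      Integrable k ℙ → ∫ ω, ((f ω + g ω) + (h ω + k ω)) ∂ℙ =
        (∫ ω, f ω ∂ℙ + ∫ ω, g ω ∂ℙ) + (∫ ω, h ω ∂ℙ + ∫ ω, k ω ∂ℙ) := by
    intro f g h k hf hg hh hk
    rw [← integral_add hf hg, ← integral_add hh hk]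
    exact integral_add (hf.add hg) (hh.add hk)
  have hsub1 : ∀ f g h k : Ω → ℝ, Integrable f ℙ → Integrable g ℙ → Integrable h ℙ →
      Integrable k ℙ → ∫ ω, ((f ω + g ω) - (h ω + k ω)) ∂ℙ =
        (∫ ω, f ω ∂ℙ + ∫ ω, g ω ∂ℙ) - (∫ ω, h ω ∂ℙ + ∫ ω, k ω ∂ℙ) := by
    intro f g h k hf hg hh hk
    rw [← integral_add hf hg, ← integral_add hh hk]
    exact integral_sub (hf.add hg) (hh.add hk)
  have hsub2 : ∀ f g h k : Ω → ℝ, Integrable f ℙ → Integrable g ℙ → Integrable h ℙ →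
      Integrable k ℙ → ∫ ω, ((f ω - g ω) + (h ω - k ω)) ∂ℙ =
        (∫ ω, f ω ∂ℙ - ∫ ω, g ω ∂ℙ) + (∫ ω, h ω ∂ℙ - ∫ ω, k ω ∂ℙ) := by
    intro f g h k hf hg hh hk
    rw [← integral_sub hf hg, ← integral_sub hh hk]
    exact integral_add (hf.sub hg) (hh.sub hk)
  have hSA : ∀ i j k l, ∫ ω, (2⁻¹ * (B ω i j + B ω j i)) * (2⁻¹ * (B ω k l - B ω l k)) ∂ℙ = 0 := by
    intro i j k l
    have e : ∀ ω, (2⁻¹ * (B ω i j + B ω j i)) * (2⁻¹ * (B ω k l - B ω l k)) =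
        4⁻¹ * ((B ω i j * B ω k l + B ω j i * B ω k l) -
          (B ω i j * B ω l k + B ω j i * B ω l k)) := by intro ω; ring
    simp_rw [e]
    rw [integral_const_mul, hsub1 _ _ _ _ (hint i j k l) (hint j i k l)
      (hint i j l k) (hint j i l k)]
    by_cases hkl : k = l
    · subst hkl; simp
    have key : ∀ m, i ≠ m → j ≠ m → (k = m ∧ l ≠ m ∨ k ≠ m ∧ l = m) →
      (∫ ω, B ω i j * B ω k l ∂ℙ = 0 ∧ ∫ ω, B ω j i * B ω k l ∂ℙ = 0 ∧
       ∫ ω, B ω i j * B ω l k ∂ℙ = 0 ∧ ∫ ω, B ω j i * B ω l k ∂ℙ = 0) := by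
      intro m hi hj h
      have h1 := hflip m i j k l
      have h2 := hflip m j i k l
      have h3 := hflip m i j l k
      have h4 := hflip m j i l k
      rcases h with ⟨ha, hb⟩ | ⟨ha, hb⟩ <;>
      · simp only [hi, hj, ha, hb, if_true, if_false] at h1 h2 h3 h4
        refine ⟨?_, ?_, ?_, ?_⟩ <;> simp only [ha, hb] <;> linarith
    by_cases hk : i ≠ k ∧ j ≠ k
    · obtain ⟨h1, h2, h3, h4⟩ := key k hk.1 hk.2 (Or.inl ⟨rfl, Ne.symm hkl⟩)
      rw [h1, h2, h3, h4]; simp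
    by_cases hl : i ≠ l ∧ j ≠ l
    · obtain ⟨h1, h2, h3, h4⟩ := key l hl.1 hl.2 (Or.inr ⟨hkl, rfl⟩)
      rw [h1, h2, h3, h4]; simp
    have hc : ∫ ω, B ω k l * B ω l k ∂ℙ = ∫ ω, B ω l k * B ω k l ∂ℙ := by
      congr 1; ext ω; ring
    have hs := hswap k l
    have hcase : (i = k ∧ j = l) ∨ (i = l ∧ j = k) := by
      by_cases h1 : i = k
      · left; refine ⟨h1, ?_⟩
        by_contra h2
        exact hl ⟨fun h => hkl (h1.symm.trans h), h2⟩
      · right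
        have h2 : j = k := by
          by_contra h2; exact hk ⟨h1, h2⟩
        refine ⟨?_, h2⟩
        by_contra h3
        exact hl ⟨h3, fun h => hkl (h2.symm.trans h)⟩
    rcases hcase with ⟨rfl, rfl⟩ | ⟨rfl, rfl⟩ <;> rw [hc, hs] <;> ring
  have hmS : ∀ i j, MemLp (fun ω => 2⁻¹ * (B ω i j + B ω j i)) 2 ℙ := fun i j =>
    ((hE i j).1.add (hE j i).1).const_mul _
  have hmA : ∀ i j, MemLp (fun ω => 2⁻¹ * (B ω i j - B ω j i)) 2 ℙ := fun i j =>
    ((hE i j).1.sub (hE j i).1).const_mul _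
  have hAS : ∀ i j k l, ∫ ω, (2⁻¹ * (B ω k l - B ω l k)) * (2⁻¹ * (B ω i j + B ω j i)) ∂ℙ = 0 := by
    intro i j k l
    rw [← hSA i j k l]
    congr 1; ext ω; ring
  have iSS : ∀ i j k l, Integrable
      (fun ω => (2⁻¹ * (B ω i j + B ω j i)) * (2⁻¹ * (B ω k l + B ω l k))) ℙ :=
    fun i j k l => (hmS i j).integrable_mul (hmS k l)
  have iAA : ∀ i j k l, Integrable
      (fun ω => (2⁻¹ * (B ω i j - B ω j i)) * (2⁻¹ * (B ω k l - B ω l k))) ℙ :=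
    fun i j k l => (hmA i j).integrable_mul (hmA k l)
  have iSA : ∀ i j k l, Integrable
      (fun ω => (2⁻¹ * (B ω i j + B ω j i)) * (2⁻¹ * (B ω k l - B ω l k))) ℙ :=
    fun i j k l => (hmS i j).integrable_mul (hmA k l)
  have iAS : ∀ i j k l, Integrable
      (fun ω => (2⁻¹ * (B ω i j - B ω j i)) * (2⁻¹ * (B ω k l + B ω l k))) ℙ :=
    fun i j k l => (hmA i j).integrable_mul (hmS k l)
  have hBB : ∀ i j, (∑ k, ∫ ω, (2⁻¹ * (B ω i k + B ω k i)) * (2⁻¹ * (B ω k j + B ω j k)) ∂ℙ) +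
      (∑ k, ∫ ω, (2⁻¹ * (B ω i k - B ω k i)) * (2⁻¹ * (B ω k j - B ω j k)) ∂ℙ) = 0 := by
    intro i j
    rw [← hB2 i j]
    simp only [Matrix.mul_apply]
    rw [integral_finsetSum _ (fun k _ => hint i k k j), ← Finset.sum_add_distrib]
    refine Finset.sum_congr rfl fun k _ => ?_
    have e : ∀ ω, B ω i k * B ω k j =
        ((2⁻¹ * (B ω i k + B ω k i)) * (2⁻¹ * (B ω k j + B ω j k)) +
        (2⁻¹ * (B ω i k - B ω k i)) * (2⁻¹ * (B ω k j - B ω j k))) +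
        ((2⁻¹ * (B ω i k + B ω k i)) * (2⁻¹ * (B ω k j - B ω j k)) +
        (2⁻¹ * (B ω i k - B ω k i)) * (2⁻¹ * (B ω k j + B ω j k))) := by intro ω; ring
    rw [integral_congr_ae (ae_of_all _ e), hadd _ _ _ _ (iSS i k k j) (iAA i k k j)
      (iSA i k k j) (iAS i k k j), hSA, hAS]
    ring
  have hBtB : ∀ i j, (∑ k, ∫ ω, (2⁻¹ * (B ω i k + B ω k i)) * (2⁻¹ * (B ω k j + B ω j k)) ∂ℙ) -
      (∑ k, ∫ ω, (2⁻¹ * (B ω i k - B ω k i)) * (2⁻¹ * (B ω k j - B ω j k)) ∂ℙ) =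
      τ * (1 : Matrix (Fin n) (Fin n) ℝ) i j := by
    intro i j
    rw [← hB3 i j]
    simp only [Matrix.mul_apply, Matrix.transpose_apply]
    rw [integral_finsetSum _ (fun k _ => hint k i k j), ← Finset.sum_sub_distrib]
    refine Finset.sum_congr rfl fun k _ => ?_
    have e : ∀ ω, B ω k i * B ω k j =
        ((2⁻¹ * (B ω i k + B ω k i)) * (2⁻¹ * (B ω k j + B ω j k)) -
        (2⁻¹ * (B ω i k - B ω k i)) * (2⁻¹ * (B ω k j - B ω j k))) +
        ((2⁻¹ * (B ω i k + B ω k i)) * (2⁻¹ * (B ω k j - B ω j k)) -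
        (2⁻¹ * (B ω i k - B ω k i)) * (2⁻¹ * (B ω k j + B ω j k))) := by intro ω; ring
    rw [integral_congr_ae (ae_of_all _ e), hsub2 _ _ _ _ (iSS i k k j) (iAA i k k j)
      (iSA i k k j) (iAS i k k j), hSA, hAS]
    ring
  refine ⟨?_, ?_, ?_⟩
  · let X : Fin n × Fin n → Ω → ℝ := fun p ω => 2⁻¹ * (B ω p.1 p.2 + B ω p.2 p.1)
    let Y : Fin n × Fin n → Ω → ℝ := fun p ω => 2⁻¹ * (B ω p.1 p.2 - B ω p.2 p.1)
    have hXm : ∀ p, Measurable (X p) := fun p => by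
      have := hent p.1 p.2; have := hent p.2 p.1; fun_prop
    have hYm : ∀ p, Measurable (Y p) := fun p => by
      have := hent p.1 p.2; have := hent p.2 p.1; fun_prop
    let T : Matrix (Fin n) (Fin n) ℝ →ₗ[ℝ] (Fin n × Fin n → ℝ) × (Fin n × Fin n → ℝ) :=
      { toFun := fun M => (fun p => 2⁻¹ * (M p.1 p.2 + M p.2 p.1),
          fun p => 2⁻¹ * (M p.1 p.2 - M p.2 p.1))
        map_add' := fun M N => by
          ext p <;> simp <;> ring
        map_smul' := fun c M => by
          ext p <;> simp <;> ring }
    have hXYm : Measurable fun ω => ((fun i ↦ X i ω, fun j ↦ Y j ω) :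
        (Fin n × Fin n → ℝ) × (Fin n × Fin n → ℝ)) :=
      (measurable_pi_lambda _ hXm).prodMk (measurable_pi_lambda _ hYm)
    have hG : HasGaussianLaw (fun ω ↦ ((fun i ↦ X i ω, fun j ↦ Y j ω) :
        (Fin n × Fin n → ℝ) × (Fin n × Fin n → ℝ))) ℙ := by
      constructor
      refine isGaussian_of_map_eq_gaussianReal fun L => ?_
      obtain ⟨v, hv⟩ := hGauss (L.toLinearMap ∘ₗ T)
      refine ⟨0, v, ?_⟩
      rw [← hv, Measure.map_map (by fun_prop) hXYm]
      rfl
    have hind := hG.indepFun_of_covariance_eval (by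
      intro p q
      rw [covariance_eq_sub (hmS p.1 p.2) (hmA q.1 q.2)]
      have h1 := hSA p.1 p.2 q.1 q.2
      have h2 : ∫ ω, X p ω ∂ℙ = 0 := by
        simp only [X]
        rw [integral_const_mul, integral_add ((hE _ _).1.integrable (by norm_num))
          ((hE _ _).1.integrable (by norm_num)), (hE _ _).2, (hE _ _).2]
        simp
      simp only [X] at h2
      rw [h2, zero_mul, sub_zero]
      exact h1)
    have hφ : Measurable fun (x : Fin n × Fin n → ℝ) =>
        (Matrix.of fun i j => x (i, j) : Matrix (Fin n) (Fin n) ℝ) :=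
      measurable_pi_lambda _ fun i => measurable_pi_lambda _ fun j => measurable_pi_apply (i, j)
    have hfin := hind.comp hφ hφ
    convert hfin using 1
    · ext ω i j; exact hS ω i j
    · ext ω i j; exact hA ω i j
  · intro i j
    simp only [Matrix.mul_apply, hS]
    rw [integral_finsetSum _ (fun k _ => iSS i k k j)]
    linarith [hBB i j, hBtB i j]
  · intro i j
    simp only [Matrix.mul_apply, hA]
    rw [integral_finsetSum _ (fun k _ => iAA i k k j)]
    linarith [hBB i j, hBtB i j]
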